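/- A 2-page book embedding exists for every planar graph that has a Hamiltonian cycle: i.e., if G is planar and Hamiltonian, the edges of G can be partitioned into two sets each of which is outerplanar (non-crossing) with respect to the cyclic vertex order given by the Hamiltonian cycle. -/

import Mathlib

/-!
The Hamiltonian cycle is drawn as a closed polygon `C`, and an edge `{a, b}` is put on one of the
two pages according to the parity of the winding number of `C` around the midpoint of the edge
(inside or outside `C`). The point is that two interleaving edges `{a, b}` and `{c, d}`, with
`a < c < b < d`, get different parities (`Drawing.crossing`).

The chord `{a, b}` splits `C` into two closed polygons: `C₁`, through `a, a + 1, …, b`, and `C₂`,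
through `b, b + 1, …, a`. Around the midpoint `m` of `{c, d}` the winding number of `C` is the sum
of those of `C₁` and `C₂` (`full_eq_add`). Winding numbers are constant off the polygon
(`wind_eq_of_segment`), and the drawing is plane; hence for `C₁` the point `m` may be moved along
`{c, d}` to `d`, then along the cycle down to `b + 1` and on to points close to `b`, while for `C₂`
it may be moved to `c`, then along the cycle up to `b - 1` and on to points close to `b`.
Likewise the midpoint of `{a, b}` may be moved close to `b` without changing the winding number
of `C`.

It remains to compare three winding numbers at points infinitely close to `b`. A winding number is
a sum of angles `ang` under which the sides are seen, and at `b` only the sides ending in `b` need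
a limit (`wind_eq_limit`). The contributions of the other sides cancel in the comparison. If
`T, U, V` are the directions from `b` to `a, b - 1, b + 1`, what is left is
`2 * (arg (-T / V) + arg (-V / U) + arg (-U / T))`, and the sum in parentheses is an argument
of `-1`, i.e. an odd multiple of `π` (`local_identity`). So the winding numbers differ by an odd
number.
-/


/-- A simple graph is planar if it has a straight-line plane drawing (by Fáry's
theorem this is equivalent to planarity): vertices go to distinct points of the
plane, open segments of edges with disjoint endpoints do not meet, and no
vertex lies in the interior of an edge. -/
def IsPlanar {V : Type*} (G : SimpleGraph V) : Prop :=
  ∃ f : V → ℝ × ℝ, Function.Injective f ∧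
    (∀ a b c d : V, G.Adj a b → G.Adj c d → a ≠ c → a ≠ d → b ≠ c → b ≠ d →
      openSegment ℝ (f a) (f b) ∩ openSegment ℝ (f c) (f d) = ∅) ∧
    (∀ v a b : V, G.Adj a b → v ≠ a → v ≠ b →
      f v ∉ openSegment ℝ (f a) (f b))

/-- Two chords `{a,b}` and `{c,d}` (with `a < b`, `c < d`) of the circle through
the vertices `0, 1, …, n-1` in this cyclic order cross iff their endpoints
interleave. -/
def ChordsCross {n : ℕ} (a b c d : Fin n) : Prop :=
  (a < c ∧ c < b ∧ b < d) ∨ (c < a ∧ a < d ∧ d < b)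

namespace BookEmbedding

open Complex Finset

/-! ### Winding numbers of closed polygons -/

/-- The signed angle, in `(-π, π]`, under which the oriented segment from `p` to `q` is seen
from `x` (junk if `x` is an endpoint). -/
noncomputable def ang (x p q : ℂ) : ℝ := arg ((q - x) / (p - x))

/-- Total angle, seen from `x`, swept by the closed polygon `b → P i → P (i+1) → ⋯ → P j → b`;
off the polygon this is `2π` times its winding number around `x`. -/
noncomputable def wind (P : ℕ → ℂ) (b : ℂ) (i j : ℕ) (x : ℂ) : ℝ :=
  ang x b (P i) + ∑ k ∈ Ico i j, ang x (P k) (P (k + 1)) + ang x (P j) b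

/-- `x` lies on no (closed) side of the polygon `b → P i → ⋯ → P j → b`. -/
def Off (P : ℕ → ℂ) (b : ℂ) (i j : ℕ) (x : ℂ) : Prop :=
  x ∉ segment ℝ b (P i) ∧ (∀ k ∈ Ico i j, x ∉ segment ℝ (P k) (P (k + 1))) ∧
    x ∉ segment ℝ (P j) b

lemma exists_of_not_mem_slitPlane {z w : ℂ} (hw : w ≠ 0) (h : z / w ∉ slitPlane) :
    ∃ r : ℝ, 0 ≤ r ∧ z = -(r * w) := by
  rw [mem_slitPlane_iff] at h
  push Not at h
  refine ⟨-(z / w).re, by linarith [h.1], ?_⟩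
  have : z / w = ((z / w).re : ℂ) := by
    apply Complex.ext <;> simp [h.2]
  rw [div_eq_iff hw] at this
  rw [this]; simp [hw]

lemma ang_mem_slitPlane {x p q : ℂ} (h : x ∉ segment ℝ p q) :
    (q - x) / (p - x) ∈ slitPlane := by
  by_contra hs
  have hp : p - x ≠ 0 := by
    intro h0
    exact h (by rw [← sub_eq_zero.1 h0]; exact left_mem_segment ℝ p q)
  obtain ⟨r, hr, e⟩ := exists_of_not_mem_slitPlane hp hs
  have hr' : (1 + r : ℂ) ≠ 0 := by
    exact_mod_cast (by positivity : (1 + r : ℝ) ≠ 0)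
  refine h ⟨r / (1 + r), 1 / (1 + r), by positivity, by positivity, by field_simp; ring, ?_⟩
  simp only [real_smul]
  push_cast
  field_simp
  linear_combination e

/-- If the points of the segment from `b` to `b + s` other than `b` avoid the segment from `b` to
`q`, then the angle between `-s` and the direction from `b + ε * s` to `q` is not `π`, even
for `ε = 0`: this makes the angle continuous up to `b`. -/
lemma ray_mem_slitPlane {b s q : ℂ} (hq : q ≠ b)
    (h : ∀ δ : ℝ, 0 < δ → δ ≤ 1 → b + δ * s ∉ segment ℝ b q) {ε : ℝ} (hε : 0 ≤ ε) (hs : s ≠ 0) :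
    (q - (b + ε * s)) / (-s) ∈ slitPlane := by
  by_contra hc
  obtain ⟨r, hr, e⟩ := exists_of_not_mem_slitPlane (neg_ne_zero.2 hs) hc
  have e' : q - b = ((r + ε : ℝ) : ℂ) * s := by push_cast; linear_combination e
  have hpos : 0 < r + ε := by
    have hnn : 0 ≤ r + ε := add_nonneg hr hε
    rcases hnn.lt_or_eq with h0 | h0
    · exact h0
    · rw [← h0] at e'
      exact absurd (sub_eq_zero.1 (by simpa using e')) hq
  set ρ := r + ε with hρ
  have hm : 0 < min 1 ρ := lt_min one_pos hpos
  refine h (min 1 ρ) hm (min_le_left _ _)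
    ⟨1 - min 1 ρ / ρ, min 1 ρ / ρ, ?_, by positivity, by ring, ?_⟩
  · rw [sub_nonneg, div_le_one hpos]; exact min_le_right _ _
  · have : (ρ : ℂ) ≠ 0 := by exact_mod_cast hpos.ne'
    rw [show q = b + ρ * s by linear_combination e']
    simp only [real_smul]
    push_cast
    field_simp
    ring

lemma arg_inv_of_slit {z : ℂ} (h : z ∈ slitPlane) : arg z⁻¹ = -arg z := by
  rw [arg_inv, if_neg (mem_slitPlane_iff_arg.1 h).1]

lemma ang_swap {x p q : ℂ} (h : x ∉ segment ℝ p q) : ang x q p = -ang x p q := by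
  unfold ang
  rw [← arg_inv_of_slit (ang_mem_slitPlane h), inv_div]

lemma slitPlane_inv {z : ℂ} (h : z ∈ slitPlane) : z⁻¹ ∈ slitPlane := by
  rw [mem_slitPlane_iff_arg, arg_inv_of_slit h]
  refine ⟨fun h' => ?_, inv_ne_zero (slitPlane_ne_zero h)⟩
  linarith [neg_pi_lt_arg z]

lemma coe_arg_div {z w : ℂ} (hz : z ≠ 0) (hw : w ≠ 0) :
    (arg (z / w) : Real.Angle) = arg z - arg w := arg_div_coe_angle hz hw

lemma coe_sum_ang (P : ℕ → ℂ) (x : ℂ) {i j : ℕ} (hij : i ≤ j)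
    (h : ∀ k, i ≤ k → k ≤ j → P k - x ≠ 0) :
    ((∑ k ∈ Ico i j, ang x (P k) (P (k + 1)) : ℝ) : Real.Angle) =
      arg (P j - x) - arg (P i - x) := by
  induction j, hij using Nat.le_induction with
  | base => simp
  | succ j hij ih =>
    rw [sum_Ico_succ_top hij, Real.Angle.coe_add, ih fun k h1 h2 => h k h1 (by omega), ang,
      coe_arg_div (h _ (by omega) le_rfl) (h _ hij (by omega))]
    abel

/-- A continuous function with values in `2πℤ` is constant. -/
lemma eq_of_coe_eq_zero {g : ℝ → ℝ} (hg : ContinuousOn g (Set.Icc 0 1))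
    (h : ∀ t ∈ Set.Icc (0 : ℝ) 1, (g t : Real.Angle) = 0) : g 0 = g 1 := by
  -- If `g` moved from `u` to `v` it would take the value `y`, but `0 < y - u ≤ π`, so `y` and `u`
  -- cannot both lie in `2πℤ`.
  have key : ∀ u v y : ℝ, (u : Real.Angle) = 0 → u < v → y = min (u + Real.pi) v →
      (y : Real.Angle) ≠ 0 := by
    intro u v y hu huv hy h0
    have h1 : u < y := by rw [hy]; exact lt_min (by linarith [Real.pi_pos]) huv
    have h2 : y ≤ u + Real.pi := by rw [hy]; exact min_le_left _ _
    have h3 : ((y - u : ℝ) : Real.Angle) = 0 := by rw [Real.Angle.coe_sub, h0, hu, sub_zero]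
    have h4 := (Real.Angle.toReal_coe_eq_self_iff (θ := y - u)).2
      ⟨by linarith [Real.pi_pos], by linarith⟩
    rw [h3, Real.Angle.toReal_zero] at h4
    linarith
  have h0 := h 0 (by simp)
  have h1 := h 1 (by simp)
  rcases lt_trichotomy (g 0) (g 1) with hl | he | hl
  · obtain ⟨t, ht, e⟩ := intermediate_value_Icc (zero_le_one' ℝ) hg
      (show min (g 0 + Real.pi) (g 1) ∈ Set.Icc (g 0) (g 1) from
        ⟨le_min (by linarith [Real.pi_pos]) hl.le, min_le_right _ _⟩)
    exact absurd (h t ht) (key _ _ _ h0 hl e)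
  · exact he
  · obtain ⟨t, ht, e⟩ := intermediate_value_Icc' (zero_le_one' ℝ) hg
      (show min (g 1 + Real.pi) (g 0) ∈ Set.Icc (g 1) (g 0) from
        ⟨le_min (by linarith [Real.pi_pos]) hl.le, min_le_right _ _⟩)
    exact absurd (h t ht) (key _ _ _ h1 hl e)

lemma Off.ne {P : ℕ → ℂ} {b : ℂ} {i j : ℕ} {x : ℂ} (h : Off P b i j x) :
    b - x ≠ 0 ∧ ∀ k, i ≤ k → k ≤ j → P k - x ≠ 0 := by
  refine ⟨fun h0 => h.1 ?_, fun k h1 h2 h0 => ?_⟩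
  · rw [← sub_eq_zero.1 h0]; exact left_mem_segment ℝ _ _
  · rcases h2.lt_or_eq with h2 | rfl
    · refine h.2.1 k (mem_Ico.2 ⟨h1, h2⟩) ?_
      rw [← sub_eq_zero.1 h0]; exact left_mem_segment ℝ _ _
    · refine h.2.2 ?_
      rw [← sub_eq_zero.1 h0]; exact left_mem_segment ℝ _ _

lemma coe_wind {P : ℕ → ℂ} {b : ℂ} {i j : ℕ} {x : ℂ} (hij : i ≤ j) (h : Off P b i j x) :
    (wind P b i j x : Real.Angle) = 0 := by
  obtain ⟨hb, hP⟩ := h.ne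
  rw [wind, Real.Angle.coe_add, Real.Angle.coe_add, coe_sum_ang P x hij hP, ang, ang,
    coe_arg_div (hP i le_rfl hij) hb, coe_arg_div hb (hP j hij le_rfl)]
  abel

lemma continuousOn_ang {γ : ℝ → ℂ} (hγ : Continuous γ) {p q : ℂ} {s : Set ℝ}
    (h : ∀ t ∈ s, γ t ∉ segment ℝ p q) : ContinuousOn (fun t => ang (γ t) p q) s := by
  intro t ht
  have hp : p - γ t ≠ 0 := fun h0 => h t ht (by
    rw [← sub_eq_zero.1 h0]; exact left_mem_segment ℝ _ _)
  have hc : ContinuousAt (fun t => (q - γ t) / (p - γ t)) t :=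
    (by fun_prop : ContinuousAt (fun t => q - γ t) t).div (by fun_prop) hp
  exact (ContinuousAt.comp (f := fun t => (q - γ t) / (p - γ t)) (g := arg)
    (continuousAt_arg (ang_mem_slitPlane (h t ht))) hc).continuousWithinAt

/-- The winding number does not change along a segment that misses the polygon. -/
lemma wind_eq_of_segment {P : ℕ → ℂ} {b : ℂ} {i j : ℕ} {x y : ℂ} (hij : i ≤ j)
    (h : ∀ z ∈ segment ℝ x y, Off P b i j z) : wind P b i j x = wind P b i j y := by
  have hγ : Continuous fun t : ℝ => AffineMap.lineMap (k := ℝ) x y t :=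
    AffineMap.lineMap_continuous
  have hO : ∀ t ∈ Set.Icc (0 : ℝ) 1, Off P b i j (AffineMap.lineMap (k := ℝ) x y t) := by
    intro t ht
    refine h _ ?_
    rw [segment_eq_image_lineMap]
    exact ⟨t, ht, rfl⟩
  have := eq_of_coe_eq_zero (g := fun t => wind P b i j (AffineMap.lineMap (k := ℝ) x y t))
    (((continuousOn_ang hγ fun t ht => (hO t ht).1).add
      (continuousOn_finsetSum _ fun k hk =>
        continuousOn_ang hγ fun t ht => (hO t ht).2.1 k hk)).add
      (continuousOn_ang hγ fun t ht => (hO t ht).2.2))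
    (fun t ht => coe_wind hij (hO t ht))
  simpa using this

/-- The winding number of a polygon around a point `b + s`, pushed along the segment to the
polygon's own vertex `b`. At `b` itself the two sides at `b` are replaced by the limits of their
angles. -/
lemma wind_eq_limit {P : ℕ → ℂ} {b s : ℂ} {i j : ℕ} (hij : i ≤ j)
    (hs : s ≠ 0) (h : ∀ δ : ℝ, 0 < δ → δ ≤ 1 → Off P b i j (b + δ * s))
    (hb : ∀ k ∈ Ico i j, b ∉ segment ℝ (P k) (P (k + 1)))
    (hP : ∀ k, i ≤ k → k ≤ j → P k ≠ b) :
    wind P b i j (b + s) = arg ((P i - b) / (-s)) + ∑ k ∈ Ico i j, ang b (P k) (P (k + 1)) +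
      arg ((-s) / (P j - b)) := by
  have hs' : -s ≠ 0 := neg_ne_zero.2 hs
  have hsi : ∀ t ∈ Set.Icc (0 : ℝ) 1, (P i - (b + t * s)) / (-s) ∈ slitPlane := fun t ht =>
    ray_mem_slitPlane (hP i le_rfl hij) (fun δ h0 h1 => (h δ h0 h1).1) ht.1 hs
  have hsj : ∀ t ∈ Set.Icc (0 : ℝ) 1, (-s) / (P j - (b + t * s)) ∈ slitPlane := by
    intro t ht
    rw [← inv_div]
    refine slitPlane_inv (ray_mem_slitPlane (hP j hij le_rfl) (fun δ h0 h1 => ?_) ht.1 hs)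
    rw [segment_symm]
    exact (h δ h0 h1).2.2
  have hne : ∀ t ∈ Set.Icc (0 : ℝ) 1, ∀ k, i ≤ k → k ≤ j → P k - (b + t * s) ≠ 0 := by
    intro t ht k h1 h2
    rcases ht.1.lt_or_eq with h0 | rfl
    · exact (h t h0 ht.2).ne.2 k h1 h2
    · simpa [sub_eq_zero] using hP k h1 h2
  have hfar : ∀ t ∈ Set.Icc (0 : ℝ) 1, ∀ k ∈ Ico i j,
      b + t * s ∉ segment ℝ (P k) (P (k + 1)) := by
    intro t ht k hk
    rcases ht.1.lt_or_eq with h0 | rfl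
    · exact (h t h0 ht.2).2.1 k hk
    · simpa using hb k hk
  have hc1 : ContinuousOn (fun t : ℝ => arg ((P i - (b + t * s)) / (-s))) (Set.Icc 0 1) := by
    intro t ht
    exact (ContinuousAt.comp (f := fun t : ℝ => (P i - (b + t * s)) / (-s)) (g := arg)
      (continuousAt_arg (hsi t ht)) (by fun_prop)).continuousWithinAt
  have hc2 : ContinuousOn (fun t : ℝ => arg ((-s) / (P j - (b + t * s)))) (Set.Icc 0 1) := by
    intro t ht
    have : ContinuousAt (fun t : ℝ => (-s) / (P j - (b + t * s))) t :=
      continuousAt_const.div (by fun_prop) (hne t ht j hij le_rfl)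
    exact (ContinuousAt.comp (f := fun t : ℝ => (-s) / (P j - (b + t * s))) (g := arg)
      (continuousAt_arg (hsj t ht)) this).continuousWithinAt
  have := eq_of_coe_eq_zero (g := fun t : ℝ => arg ((P i - (b + t * s)) / (-s)) +
      ∑ k ∈ Ico i j, ang (b + t * s) (P k) (P (k + 1)) + arg ((-s) / (P j - (b + t * s))))
    ((hc1.add (continuousOn_finsetSum _ fun k hk =>
      continuousOn_ang (γ := fun t : ℝ => b + t * s) (by fun_prop)
        fun t ht => hfar t ht k hk)).add hc2) (by
      intro t ht
      rw [Real.Angle.coe_add, Real.Angle.coe_add, coe_sum_ang P _ hij (hne t ht),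
        coe_arg_div (hne t ht i le_rfl hij) hs', coe_arg_div hs' (hne t ht j hij le_rfl)]
      abel)
  simp only [ofReal_zero, zero_mul, add_zero, ofReal_one, one_mul] at this
  rw [this]
  simp [wind, ang]

/-! ### Points on segments -/

lemma mem_ray {b q : ℂ} {δ : ℝ} (h0 : 0 < δ) (h1 : δ ≤ 1) :
    b + δ * (q - b) = q ∨ b + δ * (q - b) ∈ openSegment ℝ b q := by
  rcases h1.lt_or_eq with h1 | rfl
  · refine Or.inr ⟨1 - δ, δ, by linarith, h0, by ring, ?_⟩
    simp only [real_smul]; push_cast; ring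
  · left; simp

lemma mem_half_ray {b q : ℂ} {δ : ℝ} (h0 : 0 < δ) (h1 : δ ≤ 1) :
    b + δ * ((q - b) / 2) ∈ openSegment ℝ b q := by
  refine ⟨1 - δ / 2, δ / 2, by linarith, by linarith, by ring, ?_⟩
  simp only [real_smul]; push_cast; ring

lemma mem_half_segment {p q z : ℂ} (h : z ∈ segment ℝ ((p + q) / 2) q) :
    z = q ∨ z ∈ openSegment ℝ p q := by
  obtain ⟨s, t, hs, ht, hst, rfl⟩ := h
  rcases hs.lt_or_eq with hs | rfl
  · refine Or.inr ⟨s / 2, s / 2 + t, by linarith, by linarith, by linarith, ?_⟩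
    simp only [real_smul]; push_cast; ring
  · left
    obtain rfl : t = 1 := by linarith
    simp

lemma mem_segment_cases {p q z : ℂ} (h : z ∈ segment ℝ p q) :
    z = p ∨ z = q ∨ z ∈ openSegment ℝ p q := by
  have hz : z ∈ insert p (insert q (openSegment ℝ p q)) := by
    rwa [insert_endpoints_openSegment]
  exact hz

/-! ### Splitting the closed polygon along a chord -/

lemma sum_Ico_periodic {F : ℕ → ℝ} {n : ℕ} (hF : ∀ k, F (k + n) = F k) (b : ℕ) :
    ∑ k ∈ Ico b (b + n), F k = ∑ k ∈ range n, F k := by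
  induction b with
  | zero => rw [zero_add, Nat.Ico_zero_eq_range]
  | succ b ih =>
    rw [← ih]
    rcases Nat.eq_zero_or_pos n with rfl | hn
    · simp
    rw [sum_eq_sum_Ico_succ_bot (show b < b + n by omega), show b + 1 + n = b + n + 1 by omega,
      sum_Ico_succ_top (by omega), hF]
    ring

/-- The angle swept by the closed polygon `P 0 → P 1 → ⋯ → P n`, seen from `x`. -/
noncomputable def full (P : ℕ → ℂ) (n : ℕ) (x : ℂ) : ℝ :=
  ∑ k ∈ range n, ang x (P k) (P (k + 1))

lemma full_eq_Ico {P : ℕ → ℂ} {n : ℕ} (hper : ∀ k, P (k + n) = P k) (x : ℂ) (b : ℕ) :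
    full P n x = ∑ k ∈ Ico b (b + n), ang x (P k) (P (k + 1)) :=
  (sum_Ico_periodic (F := fun k => ang x (P k) (P (k + 1)))
    (fun k => by rw [hper, show k + n + 1 = k + 1 + n by omega, hper]) b).symm

/-- The full polygon, started at its vertex `b`. -/
lemma full_eq_wind {P : ℕ → ℂ} {n b : ℕ} (hper : ∀ k, P (k + n) = P k) (hb : 1 ≤ b)
    (hn : 3 ≤ n) (x : ℂ) : full P n x = wind P (P b) (b + 1) (b - 1 + n) x := by
  rw [full_eq_Ico hper x b, sum_eq_sum_Ico_succ_bot (by omega),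
    show b + n = b - 1 + n + 1 by omega, sum_Ico_succ_top (by omega),
    show b - 1 + n + 1 = b + n by omega, hper b, wind]
  ring

/-- The chord `{a, b}` cuts the closed polygon into two; swept angles add up. -/
lemma full_eq_add {P : ℕ → ℂ} {n a b : ℕ} (hper : ∀ k, P (k + n) = P k) (hab : a < b)
    (hbn : b < a + n) {x : ℂ} (hx : x ∉ segment ℝ (P a) (P b)) :
    full P n x = wind P (P b) a (b - 1) x + wind P (P b) (b + 1) (a + n) x := by
  rw [full_eq_Ico hper x a, ← sum_Ico_consecutive _ hab.le hbn.le,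
    sum_eq_sum_Ico_succ_bot hbn]
  obtain ⟨m, rfl⟩ : ∃ m, b = m + 1 := ⟨b - 1, by omega⟩
  rw [sum_Ico_succ_top (by omega), wind, wind, hper, ang_swap hx]
  simp only [Nat.add_sub_cancel]
  ring

/-- The angles seen from `x` under the polygon sides not ending in `b` are those of the two parts
of the polygon together. -/
lemma sum_far_add {P : ℕ → ℂ} {n a b : ℕ} (hper : ∀ k, P (k + n) = P k) (hab : a < b)
    (hbn : b < a + n) (x : ℂ) :
    ∑ k ∈ Ico (b + 1) (b - 1 + n), ang x (P k) (P (k + 1)) =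
      ∑ k ∈ Ico a (b - 1), ang x (P k) (P (k + 1)) +
      ∑ k ∈ Ico (b + 1) (a + n), ang x (P k) (P (k + 1)) := by
  rw [← sum_Ico_consecutive _ (show b + 1 ≤ a + n by omega)
    (show a + n ≤ b - 1 + n by omega), add_comm]
  congr 1
  rw [← sum_Ico_add' _ a (b - 1) n]
  refine sum_congr rfl fun k _ => ?_
  rw [hper, show k + n + 1 = k + 1 + n by omega, hper]

/-- The local computation at `b`: `T`, `U`, `V` are the directions of the chord and of the two
polygon sides at `b`. The three limits of winding numbers there differ by `2 * Θ`, where `Θ` is an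
argument of `(T / -V) * (-V / U) * (-U / T) = -1`. -/
lemma local_identity {T U V : ℂ} (hT : T ≠ 0) (hU : U ≠ 0) (hV : V ≠ 0)
    (hTV : T / (-V) ∈ slitPlane) (hTU : T / (-U) ∈ slitPlane) :
    ∃ Θ : ℝ, (Θ : Real.Angle) = Real.pi ∧
      (arg (T / (-V)) + arg ((-V) / U)) + (arg (V / (-U)) + arg ((-U) / T)) =
        (arg (V / (-(T / 2))) + arg ((-(T / 2)) / U)) + 2 * Θ := by
  have e1 : arg (V / (-U)) = arg ((-V) / U) := by rw [div_neg, neg_div]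
  have e2 : arg (V / (-(T / 2))) = -arg (T / (-V)) := by
    rw [← arg_inv_of_slit hTV, ← arg_real_mul (T / (-V))⁻¹ (two_pos : (0 : ℝ) < 2)]
    congr 1; push_cast; field_simp
  have e3 : arg ((-(T / 2)) / U) = -arg ((-U) / T) := by
    have : (-U) / T ∈ slitPlane := by rw [← inv_div]; exact slitPlane_inv hTU
    rw [← arg_inv_of_slit this,
      ← arg_real_mul ((-U) / T)⁻¹ (show (0 : ℝ) < 1 / 2 by norm_num)]
    congr 1; push_cast; field_simp
  refine ⟨arg (T / (-V)) + arg ((-V) / U) + arg ((-U) / T), ?_, ?_⟩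
  · have hU' := neg_ne_zero.2 hU
    have hV' := neg_ne_zero.2 hV
    rw [Real.Angle.coe_add, Real.Angle.coe_add, coe_arg_div hT hV', coe_arg_div hV' hU,
      coe_arg_div hU' hT, arg_neg_coe_angle hU]
    abel
  · rw [e1, e2, e3]; ring

/-! ### Interleaving chords in a plane drawing -/

/-- Equality modulo `n` for natural numbers below `2 * n`. -/
def Same (n k l : ℕ) : Prop := k = l ∨ k = l + n ∨ l = k + n

/-- A straight-line plane drawing of a graph containing the closed polygon
`P 0 → P 1 → ⋯ → P n = P 0`, with vertices named by natural numbers modulo `n`: vertices are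
distinct, no vertex lies on a foreign edge, no interior point of an edge lies on another edge. -/
structure Drawing (n : ℕ) (P : ℕ → ℂ) (E : ℕ → ℕ → Prop) : Prop where
  per : ∀ k, P (k + n) = P k
  symm : ∀ k l, E k l → E l k
  cyc : ∀ k, E k (k + 1)
  inj : ∀ k l, k < 2 * n → l < 2 * n → ¬ Same n k l → P k ≠ P l
  vertex : ∀ k l m, k < 2 * n → l < 2 * n → m < 2 * n → E l m → ¬ Same n k l → ¬ Same n k m →
    P k ∉ segment ℝ (P l) (P m)
  edge : ∀ k l k' l', k < 2 * n → l < 2 * n → k' < 2 * n → l' < 2 * n → E k l → E k' l' →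
    ¬ (Same n k k' ∧ Same n l l') → ¬ (Same n k l' ∧ Same n l k') →
    ∀ x ∈ openSegment ℝ (P k) (P l), x ∉ segment ℝ (P k') (P l')

namespace Drawing

variable {n : ℕ} {P : ℕ → ℂ} {E : ℕ → ℕ → Prop}

lemma off_first_open (D : Drawing n P E) {a b k l : ℕ} (hab : a < b) (hbn : b < n) (hE : E a b)
    (hk : k < 2 * n) (hl : l < 2 * n) (hkl : E k l)
    (h1 : ¬ (Same n k a ∧ Same n l b) ∧ ¬ (Same n k b ∧ Same n l a))
    (h2 : ∀ m, a ≤ m → m < b → ¬ (Same n k m ∧ Same n l (m + 1)) ∧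
      ¬ (Same n k (m + 1) ∧ Same n l m))
    {x : ℂ} (hx : x ∈ openSegment ℝ (P k) (P l)) : Off P (P b) a (b - 1) x := by
  have hcyc := D.cyc (b - 1)
  have h3 := h2 (b - 1) (by omega) (by omega)
  rw [show b - 1 + 1 = b by omega] at hcyc h3
  refine ⟨D.edge k l b a hk hl (by omega) (by omega) hkl (D.symm _ _ hE) h1.2 h1.1 x hx,
    fun m hm => ?_, D.edge k l (b - 1) b hk hl (by omega) (by omega) hkl hcyc h3.1 h3.2 x hx⟩
  rw [mem_Ico] at hm
  have := h2 m hm.1 (by omega)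
  exact D.edge k l m (m + 1) hk hl (by omega) (by omega) hkl (D.cyc m) this.1 this.2 x hx

lemma off_second_open (D : Drawing n P E) {a b k l : ℕ} (hab : a < b) (hbn : b < n) (hE : E a b)
    (hk : k < 2 * n) (hl : l < 2 * n) (hkl : E k l)
    (h1 : ¬ (Same n k a ∧ Same n l b) ∧ ¬ (Same n k b ∧ Same n l a))
    (h2 : ∀ m, b ≤ m → m < a + n → ¬ (Same n k m ∧ Same n l (m + 1)) ∧
      ¬ (Same n k (m + 1) ∧ Same n l m))
    {x : ℂ} (hx : x ∈ openSegment ℝ (P k) (P l)) : Off P (P b) (b + 1) (a + n) x := by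
  have h3 := h2 b le_rfl (by omega)
  refine ⟨D.edge k l b (b + 1) hk hl (by omega) (by omega) hkl (D.cyc b) h3.1 h3.2 x hx,
    fun m hm => ?_, ?_⟩
  · rw [mem_Ico] at hm
    have := h2 m (by omega) hm.2
    exact D.edge k l m (m + 1) hk hl (by omega) (by omega) hkl (D.cyc m) this.1 this.2 x hx
  · rw [D.per]
    exact D.edge k l a b hk hl (by omega) (by omega) hkl hE h1.1 h1.2 x hx

lemma off_first_vertex (D : Drawing n P E) {a b k : ℕ} (hab : a < b) (hbn : b < n) (hE : E a b)
    (h1 : b < k) (h2 : k < a + n) : Off P (P b) a (b - 1) (P k) := by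
  have hcyc := D.cyc (b - 1)
  rw [show b - 1 + 1 = b by omega] at hcyc
  refine ⟨D.vertex k b a ?_ ?_ ?_ (D.symm _ _ hE) ?_ ?_, fun m hm => ?_,
    D.vertex k (b - 1) b ?_ ?_ ?_ hcyc ?_ ?_⟩
  on_goal 6 =>
    rw [mem_Ico] at hm
    refine D.vertex k m (m + 1) ?_ ?_ ?_ (D.cyc m) ?_ ?_
  all_goals (try unfold Same); omega

lemma off_second_vertex (D : Drawing n P E) {a b k : ℕ} (hab : a < b) (hbn : b < n) (hE : E a b)
    (h1 : a < k) (h2 : k < b) : Off P (P b) (b + 1) (a + n) (P k) := by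
  refine ⟨D.vertex k b (b + 1) ?_ ?_ ?_ (D.cyc b) ?_ ?_, fun m hm => ?_, ?_⟩
  on_goal 6 =>
    rw [mem_Ico] at hm
    refine D.vertex k m (m + 1) ?_ ?_ ?_ (D.cyc m) ?_ ?_
  on_goal 11 =>
    rw [D.per]
    refine D.vertex k a b ?_ ?_ ?_ hE ?_ ?_
  all_goals (try unfold Same); omega

lemma off_full_open (D : Drawing n P E) {b k l : ℕ} (hb : 1 ≤ b) (hbn : b < n)
    (hk : k < 2 * n) (hl : l < 2 * n) (hkl : E k l)
    (h2 : ∀ m, m + 1 < 2 * n → ¬ (Same n k m ∧ Same n l (m + 1)) ∧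
      ¬ (Same n k (m + 1) ∧ Same n l m))
    {x : ℂ} (hx : x ∈ openSegment ℝ (P k) (P l)) : Off P (P b) (b + 1) (b - 1 + n) x := by
  have main : ∀ m, m + 1 < 2 * n → x ∉ segment ℝ (P m) (P (m + 1)) := fun m hm =>
    D.edge k l m (m + 1) hk hl (by omega) hm hkl (D.cyc m) (h2 m hm).1 (h2 m hm).2 x hx
  refine ⟨main b (by omega), fun m hm => ?_, ?_⟩
  · rw [mem_Ico] at hm
    exact main m (by omega)
  · have := main (b - 1) (by omega)
    rwa [show b - 1 + 1 = b by omega, ← D.per (b - 1)] at this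

/-- If `{a, b}` and `{c, d}` interleave, then the winding numbers of the polygon around the
midpoints of the two chords differ by an odd number. -/
theorem crossing (D : Drawing n P E) {a b c d : ℕ} (hac : a < c) (hcb : c < b) (hbd : b < d)
    (hdn : d < n) (hab : E a b) (hcd : E c d) :
    (full P n ((P a + P b) / 2) : Real.Angle) = 0 ∧
      ∃ Θ : ℝ, (Θ : Real.Angle) = Real.pi ∧
        full P n ((P c + P d) / 2) = full P n ((P a + P b) / 2) + 2 * Θ := by
  have hba := D.symm _ _ hab
  have hcm : (P c + P d) / 2 ∈ openSegment ℝ (P c) (P d) :=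
    ⟨1 / 2, 1 / 2, by norm_num, by norm_num, by norm_num, by
      simp only [real_smul]; push_cast; ring⟩
  -- The polygon `b → a → ⋯ → b - 1 → b`: move from the chord `{c, d}` via `d` to `b + 1`.
  have h1 : wind P (P b) a (b - 1) ((P c + P d) / 2) = wind P (P b) a (b - 1) (P (b + 1)) := by
    have hpath : ∀ k, b + 1 ≤ k → k < a + n →
        wind P (P b) a (b - 1) (P k) = wind P (P b) a (b - 1) (P (b + 1)) := by
      intro k hk
      induction k, hk using Nat.le_induction with
      | base => intro _; rfl
      | succ k hk ih =>
        intro hkn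
        rw [← ih (by omega)]
        refine (wind_eq_of_segment (by omega) fun z hz => ?_).symm
        rcases mem_segment_cases hz with rfl | rfl | hz
        · exact D.off_first_vertex (by omega) (by omega) hab (by omega) (by omega)
        · exact D.off_first_vertex (by omega) (by omega) hab (by omega) (by omega)
        · refine D.off_first_open (by omega) (by omega) hab (by omega) (by omega) (D.cyc k)
            ?_ ?_ hz <;> unfold Same <;> intros <;> omega
    rw [← hpath d (by omega) (by omega)]
    refine wind_eq_of_segment (by omega) fun z hz => ?_
    rcases mem_half_segment hz with rfl | hz
    · exact D.off_first_vertex (by omega) (by omega) hab (by omega) (by omega)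
    · refine D.off_first_open (by omega) (by omega) hab (by omega) (by omega) hcd
            ?_ ?_ hz <;> unfold Same <;> intros <;> omega
  -- The polygon `b → b + 1 → ⋯ → a → b`: move from the chord `{c, d}` via `c` to `b - 1`.
  have h2 : wind P (P b) (b + 1) (a + n) ((P c + P d) / 2) =
      wind P (P b) (b + 1) (a + n) (P (b - 1)) := by
    have hpath : ∀ k, c ≤ k → k < b →
        wind P (P b) (b + 1) (a + n) (P c) = wind P (P b) (b + 1) (a + n) (P k) := by
      intro k hk
      induction k, hk using Nat.le_induction with
      | base => intro _; rfl
      | succ k hk ih =>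
        intro hkn
        rw [ih (by omega)]
        refine wind_eq_of_segment (by omega) fun z hz => ?_
        rcases mem_segment_cases hz with rfl | rfl | hz
        · exact D.off_second_vertex (by omega) (by omega) hab (by omega) (by omega)
        · exact D.off_second_vertex (by omega) (by omega) hab (by omega) (by omega)
        · refine D.off_second_open (by omega) (by omega) hab (by omega) (by omega) (D.cyc k)
            ?_ ?_ hz <;> unfold Same <;> intros <;> omega
    rw [← hpath (b - 1) (by omega) (by omega)]
    refine wind_eq_of_segment (by omega) fun z hz => ?_
    rw [add_comm] at hz
    rcases mem_half_segment hz with rfl | hz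
    · exact D.off_second_vertex (by omega) (by omega) hab (by omega) (by omega)
    · refine D.off_second_open (by omega) (by omega) hab (by omega) (by omega)
        (D.symm _ _ hcd) ?_ ?_ hz <;> unfold Same <;> intros <;> omega
  have hpred := D.symm _ _ (D.cyc (b - 1))
  rw [show b - 1 + 1 = b by omega] at hpred
  have hne : ∀ k, k < 2 * n → ¬ Same n k b → P k ≠ P b := fun k hk h =>
    D.inj k b hk (by omega) h
  have hTn : P a ≠ P b := hne a (by omega) (by unfold Same; omega)
  have hUn : P (b - 1) ≠ P b := hne (b - 1) (by omega) (by unfold Same; omega)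
  have hVn : P (b + 1) ≠ P b := hne (b + 1) (by omega) (by unfold Same; omega)
  have hfar : ∀ k, k + 1 < 2 * n → ¬ Same n b k → ¬ Same n b (k + 1) →
      P b ∉ segment ℝ (P k) (P (k + 1)) := fun k hk h₁ h₂ =>
    D.vertex b k (k + 1) (by omega) (by omega) hk (D.cyc k) h₁ h₂
  -- Points near `b` on its three edges.
  have o1 : ∀ δ : ℝ, 0 < δ → δ ≤ 1 →
      Off P (P b) a (b - 1) (P b + δ * (P (b + 1) - P b)) := by
    intro δ h0 h1
    rcases mem_ray (b := P b) (q := P (b + 1)) h0 h1 with hz | hz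
    · rw [hz]
      exact D.off_first_vertex (by omega) (by omega) hab (by omega) (by omega)
    · refine D.off_first_open (by omega) (by omega) hab (by omega) (by omega) (D.cyc b)
            ?_ ?_ hz <;> unfold Same <;> intros <;> omega
  have o2 : ∀ δ : ℝ, 0 < δ → δ ≤ 1 →
      Off P (P b) (b + 1) (a + n) (P b + δ * (P (b - 1) - P b)) := by
    intro δ h0 h1
    rcases mem_ray (b := P b) (q := P (b - 1)) h0 h1 with hz | hz
    · rw [hz]
      exact D.off_second_vertex (by omega) (by omega) hab (by omega) (by omega)
    · refine D.off_second_open (by omega) (by omega) hab (by omega) (by omega) hpred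
            ?_ ?_ hz <;> unfold Same <;> intros <;> omega
  have o3 : ∀ δ : ℝ, 0 < δ → δ ≤ 1 →
      Off P (P b) (b + 1) (b - 1 + n) (P b + δ * ((P a - P b) / 2)) := by
    intro δ h0 h1
    refine D.off_full_open (by omega) (by omega) (by omega) (by omega) hba
      ?_ (mem_half_ray h0 h1)
    unfold Same; intros; omega
  have w1 := wind_eq_limit (by omega) (sub_ne_zero.2 hVn) o1
    (fun k hk => by
      rw [mem_Ico] at hk; apply hfar <;> (try unfold Same) <;> omega)
    (fun k _ _ => by apply hne <;> (try unfold Same) <;> omega)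
  have w2 := wind_eq_limit (by omega) (sub_ne_zero.2 hUn) o2
    (fun k hk => by
      rw [mem_Ico] at hk; apply hfar <;> (try unfold Same) <;> omega)
    (fun k _ _ => by apply hne <;> (try unfold Same) <;> omega)
  have w3 := wind_eq_limit (by omega)
    (div_ne_zero (sub_ne_zero.2 hTn) two_ne_zero) o3
    (fun k hk => by
      rw [mem_Ico] at hk; apply hfar <;> (try unfold Same) <;> omega)
    (fun k _ _ => by apply hne <;> (try unfold Same) <;> omega)
  rw [add_sub_cancel] at w1 w2
  have hmid : P b + (P a - P b) / 2 = (P a + P b) / 2 := by ring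
  rw [hmid, ← full_eq_wind D.per (by omega) (by omega), D.per,
    sum_far_add D.per (show a < b by omega) (by omega)] at w3
  rw [D.per] at w2
  have hTV := ray_mem_slitPlane (ε := 0) hTn (fun δ h0 h1 => (o1 δ h0 h1).1) le_rfl
    (sub_ne_zero.2 hVn)
  have hTU := ray_mem_slitPlane (ε := 0) hTn (fun δ h0 h1 => by
    have := (o2 δ h0 h1).2.2
    rwa [D.per, segment_symm] at this) le_rfl (sub_ne_zero.2 hUn)
  simp only [ofReal_zero, zero_mul, add_zero] at hTV hTU
  obtain ⟨Θ, hΘ, e⟩ := local_identity (sub_ne_zero.2 hTn) (sub_ne_zero.2 hUn)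
    (sub_ne_zero.2 hVn) hTV hTU
  refine ⟨?_, Θ, hΘ, ?_⟩
  · have := coe_wind (by omega) (o3 1 one_pos le_rfl)
    rwa [ofReal_one, one_mul, hmid, ← full_eq_wind D.per (by omega) (by omega)] at this
  · have hx : (P c + P d) / 2 ∉ segment ℝ (P a) (P b) := by
      refine D.edge c d a b (by omega) (by omega) (by omega) (by omega) hcd hab ?_ ?_ _ hcm <;>
        unfold Same <;> omega
    rw [full_eq_add D.per (show a < b by omega) (by omega) hx, h1, h2, w1, w2, w3]
    linarith

end Drawing

/-! ### From straight-line planarity to a drawing in `ℂ` -/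

/-- Two edges with a common endpoint meet only there. -/
lemma not_mem_of_common {p q r x : ℂ} (hpq : p ≠ q) (hqr : q ≠ r) (h1 : q ∉ openSegment ℝ p r)
    (h2 : r ∉ openSegment ℝ p q) (hx : x ∈ openSegment ℝ p q) : x ∉ segment ℝ p r := by
  rintro ⟨s', t, hs', ht, hst, rfl⟩
  obtain ⟨s, u, hs, hu, hsu, e⟩ := hx
  obtain rfl : s = 1 - u := by linarith
  obtain rfl : s' = 1 - t := by linarith
  simp only [real_smul] at e
  push_cast at e
  have e' : (u : ℂ) * (q - p) = t * (r - p) := by linear_combination e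
  have hu' : (u : ℂ) ≠ 0 := by exact_mod_cast hu.ne'
  rcases ht.lt_or_eq with ht | rfl
  · have ht' : (t : ℂ) ≠ 0 := by exact_mod_cast ht.ne'
    rcases lt_trichotomy t u with h | rfl | h
    · refine h1 ⟨1 - t / u, t / u, by rw [sub_pos, div_lt_one hu]; exact h, by positivity,
        by ring, ?_⟩
      simp only [real_smul]; push_cast; field_simp
      linear_combination -e'
    · exact hqr (by simpa using mul_left_cancel₀ hu' e')
    · refine h2 ⟨1 - u / t, u / t, by rw [sub_pos, div_lt_one ht]; exact h, by positivity,
        by ring, ?_⟩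
      simp only [real_smul]; push_cast; field_simp
      linear_combination e'
  · simp [hu', sub_eq_zero] at e'
    exact hpq e'.symm

lemma exists_drawing {n : ℕ} [NeZero n] (hn : 3 ≤ n) (G : SimpleGraph (Fin n))
    (hplanar : IsPlanar G) (hcycle : ∀ i : Fin n, G.Adj i (i + 1)) :
    ∃ P : ℕ → ℂ, Drawing n P fun k l => G.Adj (Fin.ofNat n k) (Fin.ofNat n l) := by
  obtain ⟨f, hinj, hcross, hvert⟩ := hplanar
  set φ : ℝ × ℝ →ₗ[ℝ] ℂ := (equivRealProdCLM.symm : ℝ × ℝ →ₗ[ℝ] ℂ) with hφ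
  have hφi : Function.Injective φ := equivRealProdCLM.symm.injective
  set p : Fin n → ℂ := fun v => φ (f v) with hp
  have hpi : Function.Injective p := hφi.comp hinj
  have himg : ∀ a b, openSegment ℝ (p a) (p b) = φ '' openSegment ℝ (f a) (f b) := fun a b =>
    (image_openSegment ℝ φ.toAffineMap (f a) (f b)).symm
  have hvert' : ∀ v a b, G.Adj a b → v ≠ a → v ≠ b → p v ∉ openSegment ℝ (p a) (p b) := by
    intro v a b h h1 h2 hm
    rw [himg] at hm
    obtain ⟨y, hy, e⟩ := hm
    exact hvert v a b h h1 h2 (hφi e ▸ hy)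
  have hvertc : ∀ v a b, G.Adj a b → v ≠ a → v ≠ b → p v ∉ segment ℝ (p a) (p b) := by
    intro v a b h h1 h2 hm
    rcases mem_segment_cases hm with e | e | hm
    · exact h1 (hpi e)
    · exact h2 (hpi e)
    · exact hvert' v a b h h1 h2 hm
  have hcross' : ∀ a b c d, G.Adj a b → G.Adj c d → a ≠ c → a ≠ d → b ≠ c → b ≠ d →
      ∀ x ∈ openSegment ℝ (p a) (p b), x ∉ segment ℝ (p c) (p d) := by
    intro a b c d h h' h1 h2 h3 h4 x hx hm
    rcases mem_segment_cases hm with rfl | rfl | hm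
    · exact hvert' c a b h h1.symm h3.symm hx
    · exact hvert' d a b h h2.symm h4.symm hx
    · rw [himg] at hx hm
      obtain ⟨y, hy, rfl⟩ := hx
      obtain ⟨z, hz, e⟩ := hm
      rw [hφi e] at hz
      have : y ∈ openSegment ℝ (f a) (f b) ∩ openSegment ℝ (f c) (f d) := ⟨hy, hz⟩
      rw [hcross a b c d h h' h1 h2 h3 h4] at this
      exact this
  have hcommon : ∀ a b c, G.Adj a b → G.Adj a c → b ≠ c →
      ∀ x ∈ openSegment ℝ (p a) (p b), x ∉ segment ℝ (p a) (p c) := by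
    intro a b c h h' hbc x hx
    exact not_mem_of_common (hpi.ne h.ne) (hpi.ne hbc) (hvert' b a c h' h.ne' hbc)
      (hvert' c a b h h'.ne' hbc.symm) hx
  have hedge : ∀ a b c d, G.Adj a b → G.Adj c d → ¬ (a = c ∧ b = d) → ¬ (a = d ∧ b = c) →
      ∀ x ∈ openSegment ℝ (p a) (p b), x ∉ segment ℝ (p c) (p d) := by
    intro a b c d h h' h1 h2 x hx
    by_cases e1 : a = c
    · subst e1
      exact hcommon a b d h h' (fun e => h1 ⟨rfl, e⟩) x hx
    by_cases e2 : a = d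
    · subst e2
      rw [segment_symm]
      exact hcommon a b c h h'.symm (fun e => h2 ⟨rfl, e⟩) x hx
    by_cases e3 : b = c
    · subst e3
      rw [openSegment_symm] at hx
      exact hcommon b a d h.symm h' e2 x hx
    by_cases e4 : b = d
    · subst e4
      rw [openSegment_symm] at hx
      rw [segment_symm]
      exact hcommon b a c h.symm h'.symm e1 x hx
    exact hcross' a b c d h h' e1 e2 e3 e4 x hx
  have hsame : ∀ k l, k < 2 * n → l < 2 * n → Fin.ofNat n k = Fin.ofNat n l → Same n k l := by
    intro k l hk hl h
    have h' : k % n = l % n := by simpa [Fin.ext_iff] using h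
    have hmod : ∀ m, m < 2 * n → m % n = m ∨ m % n + n = m := by
      intro m hm
      rcases lt_or_ge m n with h | h
      · exact Or.inl (Nat.mod_eq_of_lt h)
      · right
        rw [Nat.mod_eq_sub_mod h, Nat.mod_eq_of_lt (by omega)]
        omega
    unfold Same
    rcases hmod k hk with h1 | h1 <;> rcases hmod l hl with h2 | h2 <;> omega
  refine ⟨fun k => p (Fin.ofNat n k), fun k => ?_, fun k l h => h.symm, fun k => ?_, ?_, ?_, ?_⟩
  · congr 1
    simp [Fin.ext_iff]
  · have : Fin.ofNat n (k + 1) = Fin.ofNat n k + 1 := by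
      simp [Fin.ext_iff, Fin.val_add]
    rw [this]
    exact hcycle _
  · intro k l hk hl h e
    exact h (hsame k l hk hl (hpi e))
  · intro k l m hk hl hm hE h1 h2
    exact hvertc _ _ _ hE (fun e => h1 (hsame _ _ hk hl e)) (fun e => h2 (hsame _ _ hk hm e))
  · intro k l k' l' hk hl hk' hl' hE hE' h1 h2
    exact hedge _ _ _ _ hE hE'
      (fun e => h1 ⟨hsame _ _ hk hk' e.1, hsame _ _ hl hl' e.2⟩)
      (fun e => h2 ⟨hsame _ _ hk hl' e.1, hsame _ _ hl hk' e.2⟩)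

end BookEmbedding

/-- Every planar graph with a Hamiltonian cycle has a 2-page book embedding:
placing the vertices on a circle in the order of the Hamiltonian cycle, the
edges can be partitioned into two sets so that no two edges in the same set
cross. -/
theorem planar_hamiltonian_two_page_book_embedding {n : ℕ} [NeZero n] (hn : 3 ≤ n)
    (G : SimpleGraph (Fin n)) (hplanar : IsPlanar G)
    (hcycle : ∀ i : Fin n, G.Adj i (i + 1)) :
    ∃ page : Fin n → Fin n → Bool,
      ∀ a b c d : Fin n, G.Adj a b → G.Adj c d → a < b → c < d →
        page a b = page c d → ¬ ChordsCross a b c d := by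
  classical
  obtain ⟨P, D⟩ := BookEmbedding.exists_drawing hn G hplanar hcycle
  -- Whether the winding number of the Hamiltonian polygon around the midpoint of `ab` is even.
  let page : Fin n → Fin n → Bool := fun a b =>
    decide (((BookEmbedding.full P n ((P a + P b) / 2) / 2 : ℝ) : Real.Angle) = 0)
  have main : ∀ a b c d : Fin n, G.Adj a b → G.Adj c d → a < c → c < b → b < d →
      page a b ≠ page c d := by
    intro a b c d hab hcd h1 h2 h3 hpage
    obtain ⟨h0, Θ, hΘ, e⟩ := D.crossing (a := a) (b := b) (c := c) (d := d) h1 h2 h3 d.isLt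
      (by simpa using hab) (by simpa using hcd)
    have e' : ((BookEmbedding.full P n ((P c + P d) / 2) / 2 : ℝ) : Real.Angle) =
        ((BookEmbedding.full P n ((P a + P b) / 2) / 2 : ℝ) : Real.Angle) + Real.pi := by
      rw [← hΘ, ← Real.Angle.coe_add, e]
      congr 1
      ring
    have hdbl : (2 : ℕ) • ((BookEmbedding.full P n ((P a + P b) / 2) / 2 : ℝ) : Real.Angle) = 0 := by
      rw [← Real.Angle.coe_nsmul, ← h0]
      congr 1
      simp only [nsmul_eq_mul]
      push_cast
      ring
    simp only [page, e', decide_eq_decide] at hpage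
    rcases Real.Angle.two_nsmul_eq_zero_iff.1 hdbl with hz | hz <;> rw [hz] at hpage
    · exact Real.Angle.pi_ne_zero (by simpa using hpage)
    · exact Real.Angle.pi_ne_zero (by simpa using hpage)
  refine ⟨page, fun a b c d hab hcd _ _ hpage hx => ?_⟩
  rcases hx with ⟨h1, h2, h3⟩ | ⟨h1, h2, h3⟩
  · exact main a b c d hab hcd h1 h2 h3 hpage
  · exact main c d a b hcd hab h1 h2 h3 hpage.symm
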